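/- arXiv:2508.07857 — 3 statements merged into one kernel-verified Lean document; each statement's English description precedes it below -/
import Mathlib

section
/- For every multi-parameter q, the state τ_q is tracial on ℂ_q[W]: for all x, y ∈ ℂ_q[W] one has τ_q(xy) = τ_q(yx), i.e. ⟨xy δ_e, δ_e⟩ = ⟨yx δ_e, δ_e⟩. -/
/-!
Along reduced words `T w δ_e = δ_w`. Dually, `(T s f) v = f (s v)` whenever `ℓ v < ℓ (s v)`, so
peeling reduced words from the right gives `(T w f) e = f w⁻¹` for every `f ∈ ℓ²(W)`. Together,
`(T v T w δ_e) e = δ_w v⁻¹`, which is `1` if `v w = e` and `0` otherwise: a condition symmetric in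
`v` and `w`. Bilinearity extends this to the span.
-/

noncomputable section

open scoped InnerProductSpace ComplexOrder

/-- The Hilbert space ℓ²(W) of square-summable complex functions on `W`. -/
abbrev l2 (W : Type*) := lp (fun _ : W => ℂ) 2

/-- The canonical orthonormal basis vector δ_w of ℓ²(W). -/
def delta {W : Type*} [DecidableEq W] (w : W) : l2 W := lp.single 2 w (1 : ℂ)

/-- Bounded operators on ℓ²(W). -/
abbrev Op (W : Type*) := l2 W →L[ℂ] l2 W

/-- `q` is a multi-parameter: positive, and constant on conjugate simple reflections. -/
def IsMultiParam {B W : Type*} [Group W] {M : CoxeterMatrix B} (cs : CoxeterSystem M W)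
    (q : B → ℝ) : Prop :=
  (∀ i, 0 < q i) ∧ ∀ i j, IsConj (cs.simple i) (cs.simple j) → q i = q j

/-- p_s(q) = (q_s - 1)/√(q_s). -/
def pparam {B : Type*} (q : B → ℝ) (i : B) : ℝ := (q i - 1) / Real.sqrt (q i)

/-- `T` is the family of Hecke operators (T_w^{(q)})_{w ∈ W} on ℓ²(W):
`T 1 = 1`; `T s δ_w = δ_{sw}` if ℓ(sw) > ℓ(w); `T s δ_w = δ_{sw} + p_s(q) δ_w` if
ℓ(sw) < ℓ(w); and `T (s w) = T s * T w` whenever ℓ(sw) > ℓ(w). -/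
def IsHeckeFamily {B W : Type*} [Group W] [DecidableEq W] {M : CoxeterMatrix B}
    (cs : CoxeterSystem M W) (q : B → ℝ) (T : W → Op W) : Prop :=
  T 1 = 1 ∧
  (∀ (i : B) (w : W), cs.length w < cs.length (cs.simple i * w) →
    T (cs.simple i) (delta w) = delta (cs.simple i * w)) ∧
  (∀ (i : B) (w : W), cs.length (cs.simple i * w) < cs.length w →
    T (cs.simple i) (delta w) = delta (cs.simple i * w) + (pparam q i : ℂ) • delta w) ∧
  (∀ (i : B) (w : W), cs.length w < cs.length (cs.simple i * w) →
    T (cs.simple i * w) = T (cs.simple i) * T w)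

section Span

variable {R A M : Type*} [Semiring R] [NonUnitalNonAssocSemiring A] [Module R A]
  [IsScalarTower R A A] [SMulCommClass R A A] [AddCommMonoid M] [Module R M]

theorem map_mul_comm_of_mem_span {τ : A →ₗ[R] M} {s : Set A}
    (h : ∀ a ∈ s, ∀ b ∈ s, τ (a * b) = τ (b * a)) {a b : A}
    (ha : a ∈ Submodule.span R s) (hb : b ∈ Submodule.span R s) : τ (a * b) = τ (b * a) := by
  induction ha, hb using Submodule.span_induction₂ with
  | mem_mem a b ha hb => exact h a ha b hb
  | zero_left | zero_right => simp only [zero_mul, mul_zero]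
  | add_left _ _ _ _ _ _ h₁ h₂ | add_right _ _ _ _ _ _ h₁ h₂ =>
    simp only [add_mul, mul_add, map_add, h₁, h₂]
  | smul_left _ _ _ _ _ h | smul_right _ _ _ _ _ h =>
    simp only [smul_mul_assoc, mul_smul_comm, map_smul, h]

end Span

section AscentInduction

variable {B W : Type*} [Group W] {M : CoxeterMatrix B} (cs : CoxeterSystem M W)

theorem ascent_induction_left {P : W → Prop} (w : W) (one : P 1)
    (simple_mul : ∀ i w, cs.length w < cs.length (cs.simple i * w) → P w → P (cs.simple i * w)) :
    P w := by
  induction hn : cs.length w using Nat.strong_induction_on generalizing w with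
  | h n ih =>
    obtain rfl | hw := eq_or_ne w 1
    · exact one
    · obtain ⟨i, hi⟩ := cs.exists_leftDescent_of_ne_one hw
      have hlt : cs.length (cs.simple i * w) < cs.length w := hi
      simpa using simple_mul i (cs.simple i * w) (by simpa using hlt) (ih _ (hn ▸ hlt) _ rfl)

theorem ascent_induction_right {P : W → Prop} (w : W) (one : P 1)
    (mul_simple : ∀ i w, cs.length w < cs.length (w * cs.simple i) → P w → P (w * cs.simple i)) :
    P w := by
  rw [← inv_inv w]
  induction w⁻¹ using ascent_induction_left cs with
  | one => simpa using one
  | simple_mul i w hlt hw =>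
    have hlt' : cs.length w⁻¹ < cs.length (w⁻¹ * cs.simple i) := by
      rwa [← cs.length_inv (w⁻¹ * _), mul_inv_rev, inv_inv, cs.inv_simple, cs.length_inv]
    simpa using mul_simple i w⁻¹ hlt' hw

end AscentInduction

section CanonicalTrace

variable {W : Type*} [DecidableEq W]

theorem delta_apply (w v : W) : (delta w : l2 W) v = if v = w then 1 else 0 := by
  simp only [delta, lp.single_apply, Pi.single_apply]

theorem l2_ext_delta {F : Type*} [AddCommMonoid F] [Module ℂ F] [TopologicalSpace F] [T2Space F]
    {φ ψ : l2 W →L[ℂ] F} (h : ∀ w, φ (delta w) = ψ (delta w)) : φ = ψ :=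
  lp.ext_continuousLinearMap ENNReal.ofNat_ne_top fun w => ContinuousLinearMap.ext_ring (h w)

variable [One W]

/-- The state `τ_q : x ↦ ⟨x δ_e, δ_e⟩`, written as the value of `x δ_e` at `e` so that it is
linear: Mathlib's inner product is conjugate-linear in its first argument. -/
def canonicalTrace : Op W →ₗ[ℂ] ℂ where
  toFun x := x (delta 1) 1
  map_add' _ _ := rfl
  map_smul' _ _ := rfl

theorem inner_apply_delta_one (x : Op W) :
    ⟪x (delta (1 : W)), delta (1 : W)⟫_ℂ = star (canonicalTrace x) := by
  simp [delta, canonicalTrace, lp.inner_single_right]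

end CanonicalTrace

section Hecke

variable {B W : Type*} [Group W] [DecidableEq W] {M : CoxeterMatrix B}

/-- A Hecke family in which the coefficients `p_s(q)` are replaced by arbitrary complex numbers
`p i`, indexed by the simple reflections. -/
structure IsHeckeFamilyWith (cs : CoxeterSystem M W) (p : B → ℂ) (T : W → Op W) : Prop where
  map_one : T 1 = 1
  simple_delta_of_lt (i : B) (w : W) (h : cs.length w < cs.length (cs.simple i * w)) :
    T (cs.simple i) (delta w) = delta (cs.simple i * w)
  simple_delta_of_gt (i : B) (w : W) (h : cs.length (cs.simple i * w) < cs.length w) :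
    T (cs.simple i) (delta w) = delta (cs.simple i * w) + p i • delta w
  map_simple_mul (i : B) (w : W) (h : cs.length w < cs.length (cs.simple i * w)) :
    T (cs.simple i * w) = T (cs.simple i) * T w

theorem IsHeckeFamily.isHeckeFamilyWith {cs : CoxeterSystem M W} {q : B → ℝ} {T : W → Op W}
    (hT : IsHeckeFamily cs q T) : IsHeckeFamilyWith cs (fun i => (pparam q i : ℂ)) T :=
  ⟨hT.1, hT.2.1, hT.2.2.1, hT.2.2.2⟩

namespace IsHeckeFamilyWith

variable {cs : CoxeterSystem M W} {p : B → ℂ} {T : W → Op W}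

theorem map_mul_of_length_mul (hT : IsHeckeFamilyWith cs p T) {v w : W}
    (h : cs.length (v * w) = cs.length v + cs.length w) : T (v * w) = T v * T w := by
  induction v using ascent_induction_left cs with
  | one => simp only [one_mul, hT.map_one]
  | simple_mul i v hlt ih =>
    rw [mul_assoc] at h ⊢
    rw [cs.not_isLeftDescent_iff.mp hlt.not_gt] at h
    have hle := cs.length_mul_le v w
    have hsimple := cs.length_simple_mul (v * w) i
    have hvw : cs.length (v * w) = cs.length v + cs.length w := by omega
    rw [hT.map_simple_mul i (v * w) (by omega), ih hvw, hT.map_simple_mul i v hlt, mul_assoc]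

theorem apply_delta_one (hT : IsHeckeFamilyWith cs p T) (w : W) : T w (delta 1) = delta w := by
  induction w using ascent_induction_left cs with
  | one => rw [hT.map_one, one_apply_eq_self]
  | simple_mul i w hlt ih =>
    rw [hT.map_simple_mul i w hlt, mul_apply_eq_comp, ih, hT.simple_delta_of_lt i w hlt]

theorem simple_apply_of_lt (hT : IsHeckeFamilyWith cs p T) {i : B} {v : W}
    (hv : cs.length v < cs.length (cs.simple i * v)) (f : l2 W) :
    T (cs.simple i) f v = f (cs.simple i * v) := by
  let ev (u : W) : l2 W →L[ℂ] ℂ := lp.evalCLM ℂ (fun _ : W => ℂ) 2 u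
  suffices (ev v).comp (T (cs.simple i)) = ev (cs.simple i * v) from congr($this f)
  refine l2_ext_delta fun w => ?_
  change T (cs.simple i) (delta w) v = (delta w : l2 W) (cs.simple i * v)
  have hswap : v = cs.simple i * w ↔ cs.simple i * v = w := by
    rw [← inv_mul_eq_iff_eq_mul, cs.inv_simple]
  rcases (cs.length_simple_mul_ne w i).lt_or_gt with hw | hw
  -- The extra term `p i • δ_w` is invisible at `v`, since `s_i` is an ascent of `v`, not of `w`.
  · have hvw : v ≠ w := by rintro rfl; exact hv.not_gt hw
    simp only [hT.simple_delta_of_gt i w hw, lp.coeFn_add, lp.coeFn_smul, Pi.add_apply,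
      Pi.smul_apply, delta_apply, hswap, if_neg hvw, smul_zero, add_zero]
  · simp only [hT.simple_delta_of_lt i w hw, delta_apply, hswap]

theorem apply_one (hT : IsHeckeFamilyWith cs p T) (w : W) (f : l2 W) : T w f 1 = f w⁻¹ := by
  induction w using ascent_induction_right cs generalizing f with
  | one => rw [hT.map_one, one_apply_eq_self, inv_one]
  | mul_simple i w hlt ih =>
    have hadd : cs.length (w * cs.simple i) = cs.length w + cs.length (cs.simple i) := by
      rw [cs.length_simple, cs.not_isRightDescent_iff.mp hlt.not_gt]
    have hinv : (w * cs.simple i)⁻¹ = cs.simple i * w⁻¹ := by rw [mul_inv_rev, cs.inv_simple]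
    have hlt' : cs.length w⁻¹ < cs.length (cs.simple i * w⁻¹) := by
      rwa [← hinv, cs.length_inv, cs.length_inv]
    rw [hT.map_mul_of_length_mul hadd, mul_apply_eq_comp, ih, hT.simple_apply_of_lt hlt', hinv]

theorem canonicalTrace_mul (hT : IsHeckeFamilyWith cs p T) (v w : W) :
    canonicalTrace (T v * T w) = if v * w = 1 then 1 else 0 := by
  change T v (T w (delta 1)) 1 = _
  simp only [hT.apply_one, hT.apply_delta_one, delta_apply, inv_eq_iff_mul_eq_one]

end IsHeckeFamilyWith

theorem heckeTrace_tracial_general (cs : CoxeterSystem M W) (p : B → ℂ) (T : W → Op W)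
    (hT : IsHeckeFamilyWith cs p T) (x y : Op W)
    (hx : x ∈ Submodule.span ℂ (Set.range T)) (hy : y ∈ Submodule.span ℂ (Set.range T)) :
    ⟪(x * y) (delta (1 : W)), delta (1 : W)⟫_ℂ = ⟪(y * x) (delta (1 : W)), delta (1 : W)⟫_ℂ := by
  rw [inner_apply_delta_one, inner_apply_delta_one]
  congr 1
  refine map_mul_comm_of_mem_span ?_ hx hy
  rintro _ ⟨v, rfl⟩ _ ⟨w, rfl⟩
  simp only [hT.canonicalTrace_mul, mul_eq_one_comm]

end Hecke

/-- τ_q is tracial on ℂ_q[W]: ⟨xy δ_e, δ_e⟩ = ⟨yx δ_e, δ_e⟩ for all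
x, y in the linear span of the Hecke operators. -/
theorem heckeTrace_tracial {B W : Type*} [Fintype B] [Group W] [DecidableEq W]
    {M : CoxeterMatrix B} (cs : CoxeterSystem M W) (q : B → ℝ) (hq : IsMultiParam cs q)
    (T : W → Op W) (hT : IsHeckeFamily cs q T) (x y : Op W)
    (hx : x ∈ Submodule.span ℂ (Set.range T)) (hy : y ∈ Submodule.span ℂ (Set.range T)) :
    ⟪(x * y) (delta (1 : W)), delta (1 : W)⟫_ℂ = ⟪(y * x) (delta (1 : W)), delta (1 : W)⟫_ℂ :=
  heckeTrace_tracial_general cs _ T hT.isHeckeFamilyWith x y hx hy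
end
end

section
/- Suppose W is δ-hyperbolic for some δ ≥ 0, i.e. ℓ(w₁⁻¹w₂) + ℓ(w₃⁻¹w₄) ≤ max{ℓ(w₁⁻¹w₃) + ℓ(w₂⁻¹w₄), ℓ(w₁⁻¹w₄) + ℓ(w₂⁻¹w₃)} + δ for all w₁, w₂, w₃, w₄ ∈ W. If v ≤ x and v′ ≤ x in the right weak Bruhat order, then ℓ(v⁻¹v′) ≤ |ℓ(v) − ℓ(v′)| + δ. -/
/-!
The elements below `x` in the right weak order are the points on geodesics from `1` to `x` in the
word metric. If `v` and `v'` lie on geodesics from `o` to `x`, then the two sums inside the maximum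
of the four-point condition for `v, v', o, x` are `d o x ± (d v o - d v' o)`, so the maximum is
`d o x + |d v o - d v' o|`; cancelling `d o x` bounds `d v v'`.
-/

noncomputable section

/-- `v ≤ w` in the right weak Bruhat order: ℓ(v⁻¹w) = ℓ(w) − ℓ(v). -/
def WeakLE {B W : Type*} [Group W] {M : CoxeterMatrix B} (cs : CoxeterSystem M W)
    (v w : W) : Prop :=
  cs.length v + cs.length (v⁻¹ * w) = cs.length w

/-- Gromov's four-point condition with constant `δ`. The distance is an explicit function rather
than a `PseudoMetricSpace` instance, so that it can be applied to the word metric of a group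
without equipping the group with a metric structure. -/
def FourPointHyperbolic {X : Type*} (d : X → X → ℝ) (δ : ℝ) : Prop :=
  ∀ p q r s : X, d p q + d r s ≤ max (d p r + d q s) (d p s + d q r) + δ

theorem FourPointHyperbolic.le_abs_sub_add {X : Type*} {d : X → X → ℝ} {δ : ℝ}
    (hd : FourPointHyperbolic d δ) {o x v v' : X}
    (hv : d v o + d v x = d o x) (hv' : d v' o + d v' x = d o x) :
    d v v' ≤ |d v o - d v' o| + δ := by
  have four_point : d v v' + d o x ≤ max (d v o + d v' x) (d v x + d v' o) + δ := hd v v' o x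
  have max_le_add_abs : max (d v o + d v' x) (d v x + d v' o) ≤ d o x + |d v o - d v' o| :=
    max_le (by linarith [le_abs_self (d v o - d v' o)])
      (by linarith [neg_le_abs (d v o - d v' o)])
  linarith

section WordMetric

variable {B W : Type*} [Group W] {M : CoxeterMatrix B} (cs : CoxeterSystem M W)

/-- The left-invariant word metric of a Coxeter system, real-valued so that it can be compared with
real hyperbolicity constants. -/
def wordDist (v w : W) : ℝ :=
  cs.length (v⁻¹ * w)

theorem wordDist_one_left (w : W) : wordDist cs 1 w = cs.length w := by
  simp [wordDist]

theorem wordDist_one_right (v : W) : wordDist cs v 1 = cs.length v := by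
  simp [wordDist]

variable {cs}

theorem WeakLE.wordDist_add_wordDist {v x : W} (h : WeakLE cs v x) :
    wordDist cs v 1 + wordDist cs v x = wordDist cs 1 x := by
  rw [wordDist_one_left, wordDist_one_right, wordDist]
  exact_mod_cast h

theorem hyperbolic_weak_order_estimate_general {δ : ℝ}
    (hyp : FourPointHyperbolic (wordDist cs) δ) {x v v' : W}
    (hv : WeakLE cs v x) (hv' : WeakLE cs v' x) :
    wordDist cs v v' ≤ |(cs.length v : ℝ) - (cs.length v' : ℝ)| + δ := by
  simpa only [wordDist_one_right] using
    hyp.le_abs_sub_add hv.wordDist_add_wordDist hv'.wordDist_add_wordDist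

end WordMetric

/-- If `W` is δ-hyperbolic (four-point condition) and v ≤ x, v′ ≤ x in
the right weak Bruhat order, then ℓ(v⁻¹v′) ≤ |ℓ(v) − ℓ(v′)| + δ. -/
theorem hyperbolic_weak_order_estimate {B W : Type*} [Fintype B] [Group W]
    {M : CoxeterMatrix B} (cs : CoxeterSystem M W) (δ : ℝ) (hδ : 0 ≤ δ)
    (hyp : ∀ w₁ w₂ w₃ w₄ : W,
      (cs.length (w₁⁻¹ * w₂) : ℝ) + (cs.length (w₃⁻¹ * w₄) : ℝ) ≤
        max ((cs.length (w₁⁻¹ * w₃) : ℝ) + (cs.length (w₂⁻¹ * w₄) : ℝ))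
            ((cs.length (w₁⁻¹ * w₄) : ℝ) + (cs.length (w₂⁻¹ * w₃) : ℝ)) + δ)
    (x v v' : W) (hv : WeakLE cs v x) (hv' : WeakLE cs v' x) :
    (cs.length (v⁻¹ * v') : ℝ) ≤ |(cs.length v : ℝ) - (cs.length v' : ℝ)| + δ :=
  hyperbolic_weak_order_estimate_general hyp hv hv'
end
end

section
/- Suppose Γ contains no induced square. For i ∈ ℕ and x, y ∈ W, let R_{x,y}(i) be the number of tuples (u, Γ₁, v₁, v₂, Γ₂, w₁, w₂) with u, v₁, v₂, w₁, w₂ ∈ W and Γ₁, Γ₂ cliques of Γ such that: x = v₁ V(Γ₁) v₂; y = (w₁w₂)⁻¹ u; v₁ ≤ u and w₁ ≤ u in the right weak Bruhat order; ℓ(u) = i; 2ℓ(v₁) = i + ℓ(x) − ℓ(y) − #VΓ₁; 2ℓ(v₂) = 2ℓ(x) − (i + ℓ(x) − ℓ(y) + #VΓ₁); 2ℓ(w₁) = i + ℓ(x) − ℓ(y) − #VΓ₂; and 2ℓ(w₂) = 2ℓ(x) − (i + ℓ(x) − ℓ(y) + #VΓ₂). Then there exists a constant K > 0 such that R_{x,y}(i)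 ≤ K for all i ∈ ℕ and all x, y ∈ W. -/
/-!
The heart of the matter is that two elements `v, v' ≤ u` of comparable length are close to each
other. After cancelling common left descents, every letter of a reduced word for `v` commutes with
every letter of a reduced word for `v'`. Two non-commuting letters of `v` together with two
non-commuting letters of `v'` would be an induced square, so the letters of `v` or those of `v'`
form a clique; that word then has at most `|S|` letters, and the other one is not much longer.

Since the length conditions make the factorisations of `x` and `y` reduced, this applies to `v₁`
below `x`, to `v₁` and `w₁` below `u`, to `v₂⁻¹` below `x⁻¹` and to `(w₁⁻¹u)⁻¹` below `y⁻¹`.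
Relative to one fixed tuple, any other one is thus determined by two cliques and four elements of a
ball of radius `3|S|`.

The commutation rests on the lifting property of the weak order: if `v ≤ w` and `i` is a left
descent of `w` but not of `v`, then `sᵢv ≤ w` and `v ≤ sᵢw`. It follows from the cocycle identity
for the parity of left inversions. In particular, two left descents `i`, `j` of `w` with
`m(i, j) = ∞` would give `(sᵢsⱼ)ⁿ ≤ w` for all `n`, which is absurd.
-/

noncomputable section

/-- The Coxeter system is right-angled: all off-diagonal exponents are 2 or ∞ (coded 0). -/
def RightAngled {B : Type*} (Mx : CoxeterMatrix B) : Prop :=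
  ∀ i j, i ≠ j → Mx i j = 2 ∨ Mx i j = 0

/-- The graph Γ (vertices S, edges where m = 2) contains an induced square. -/
def HasInducedSquare {B : Type*} (Mx : CoxeterMatrix B) : Prop :=
  ∃ s₁ s₂ s₃ s₄ : B, Mx s₁ s₂ = 2 ∧ Mx s₂ s₃ = 2 ∧ Mx s₃ s₄ = 2 ∧ Mx s₄ s₁ = 2 ∧
    Mx s₁ s₃ = 0 ∧ Mx s₂ s₄ = 0

/-- `F` is (the vertex set of) a clique of the graph Γ. -/
def IsMClique {B : Type*} (Mx : CoxeterMatrix B) (F : Finset B) : Prop :=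
  ∀ i ∈ F, ∀ j ∈ F, i ≠ j → Mx i j = 2

/-- `g = V(Γ₀)`, the product of the (pairwise commuting) simple reflections of the
clique with vertex set `F`. -/
def CliqueProd {B W : Type*} [DecidableEq B] [Group W] {M : CoxeterMatrix B} (cs : CoxeterSystem M W)
    (F : Finset B) (g : W) : Prop :=
  ∃ l : List B, l.Nodup ∧ l.toFinset = F ∧ g = (l.map cs.simple).prod

/-- The condition defining the tuples (u, Γ₁, v₁, v₂, Γ₂, w₁, w₂) counted by R_{x,y}(i). -/
def TupleCond {B W : Type*} [DecidableEq B] [Group W] (M : CoxeterMatrix B) (cs : CoxeterSystem M W)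
    (i : ℕ) (x y : W) (p : W × Finset B × W × W × Finset B × W × W) : Prop :=
  match p with
  | (u, Γ₁, v₁, v₂, Γ₂, w₁, w₂) =>
    IsMClique M Γ₁ ∧ IsMClique M Γ₂ ∧
    (∃ g : W, CliqueProd cs Γ₁ g ∧ x = v₁ * g * v₂) ∧
    y = (w₁ * w₂)⁻¹ * u ∧
    WeakLE cs v₁ u ∧ WeakLE cs w₁ u ∧
    cs.length u = i ∧
    2 * (cs.length v₁ : ℤ) =
      (i : ℤ) + (cs.length x : ℤ) - (cs.length y : ℤ) - (Γ₁.card : ℤ) ∧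
    2 * (cs.length v₂ : ℤ) =
      2 * (cs.length x : ℤ) - ((i : ℤ) + (cs.length x : ℤ) - (cs.length y : ℤ) + (Γ₁.card : ℤ)) ∧
    2 * (cs.length w₁ : ℤ) =
      (i : ℤ) + (cs.length x : ℤ) - (cs.length y : ℤ) - (Γ₂.card : ℤ) ∧
    2 * (cs.length w₂ : ℤ) =
      2 * (cs.length x : ℤ) - ((i : ℤ) + (cs.length x : ℤ) - (cs.length y : ℤ) + (Γ₂.card : ℤ))

section Inversions

variable {B W : Type*} [Group W] {M : CoxeterMatrix B} (cs : CoxeterSystem M W)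

open Classical in
/-- The affine action of the simple reflection `sᵢ` on functions `W → ZMod 2`. It extends to `W`,
and the orbit of `0` then records the left inversion sets of the elements of `W`. -/
def inversionStep (i : B) : Function.End (W → ZMod 2) :=
  fun F t => (if t = cs.simple i then 1 else 0) + F (cs.simple i * t * cs.simple i)

open Classical in
theorem inversionStep_mul_apply (i j : B) (F : W → ZMod 2) (t : W) :
    (inversionStep cs i * inversionStep cs j) F t =
      (if t = cs.simple i then 1 else 0) +
        (if t = cs.simple i * cs.simple j * cs.simple i then 1 else 0) +
        F ((cs.simple i * cs.simple j)⁻¹ * t * (cs.simple i * cs.simple j)) := by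
  have conj_eq : cs.simple i * t * cs.simple i = cs.simple j ↔
      t = cs.simple i * cs.simple j * cs.simple i := by
    rw [← eq_mul_inv_iff_mul_eq, ← eq_inv_mul_iff_mul_eq, cs.inv_simple, mul_assoc]
  change inversionStep cs i (inversionStep cs j F) t = _
  simp only [inversionStep, conj_eq, mul_inv_rev, cs.inv_simple, add_assoc]
  simp only [mul_assoc]

open Classical in
theorem inversionStep_mul_pow_apply (i j : B) (n : ℕ) (F : W → ZMod 2) (t : W) :
    ((inversionStep cs i * inversionStep cs j) ^ n) F t =
      ∑ k ∈ Finset.range (2 * n),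
          (if t = (cs.simple i * cs.simple j) ^ k * cs.simple i then 1 else 0) +
        F (((cs.simple i * cs.simple j) ^ n)⁻¹ * t * (cs.simple i * cs.simple j) ^ n) := by
  induction n generalizing t with
  | zero =>
    simp only [mul_zero, Finset.range_zero, Finset.sum_empty, pow_zero, inv_one, one_mul, mul_one,
      zero_add]
    rfl
  | succ n ih =>
    have hstep := inversionStep_mul_apply cs i j
      (((inversionStep cs i * inversionStep cs j) ^ n) F) t
    have hinv : cs.simple i * (cs.simple i * cs.simple j)⁻¹ =
      cs.simple i * cs.simple j * cs.simple i := by simp [mul_assoc]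
    set r := cs.simple i * cs.simple j
    have shift_two (k : ℕ) :
        r⁻¹ * t * r = r ^ k * cs.simple i ↔ t = r ^ (k + 1 + 1) * cs.simple i := by
      rw [← eq_mul_inv_iff_mul_eq, inv_mul_eq_iff_eq_mul, mul_assoc (r ^ k), hinv,
        pow_succ, pow_succ']
      simp only [mul_assoc]
    rw [pow_succ']
    refine hstep.trans ?_
    rw [ih, Nat.mul_succ, Finset.sum_range_succ', Finset.sum_range_succ']
    simp only [shift_two, pow_zero, one_mul, zero_add, pow_one]
    simp only [pow_succ', mul_inv_rev, mul_assoc]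
    abel

open Classical in
theorem isLiftable_inversionStep : M.IsLiftable (inversionStep cs) := by
  intro i j
  funext F t
  have periodic (k : ℕ) : (cs.simple i * cs.simple j) ^ (M i j + k) =
      (cs.simple i * cs.simple j) ^ k := by rw [pow_add, cs.simple_mul_simple_pow, one_mul]
  have sum_eq_zero : ∑ k ∈ Finset.range (2 * M i j),
      (if t = (cs.simple i * cs.simple j) ^ k * cs.simple i then (1 : ZMod 2) else 0) = 0 := by
    simp only [two_mul, Finset.sum_range_add, periodic, CharTwo.add_self_eq_zero]
  rw [inversionStep_mul_pow_apply, sum_eq_zero, cs.simple_mul_simple_pow, inv_one, one_mul,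
    mul_one, zero_add]
  rfl

/-- The parity of the number of occurrences of `t` in the left inversion sequence of any word for
`w`. For a reflection `t` it is `1` exactly when `t` is a left inversion of `w`. -/
def leftInversionParity (w t : W) : ZMod 2 :=
  cs.lift ⟨inversionStep cs, isLiftable_inversionStep cs⟩ w 0 t

theorem leftInversionParity_one (t : W) : leftInversionParity cs 1 t = 0 := by
  simp only [leftInversionParity, map_one]
  rfl

open Classical in
theorem leftInversionParity_simple_mul (i : B) (w t : W) :
    leftInversionParity cs (cs.simple i * w) t =
      (if t = cs.simple i then 1 else 0) +
        leftInversionParity cs w (cs.simple i * t * cs.simple i) := by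
  simp only [leftInversionParity, map_mul, cs.lift_apply_simple (isLiftable_inversionStep cs)]
  rfl

theorem leftInversionParity_mul (v w t : W) :
    leftInversionParity cs (v * w) t =
      leftInversionParity cs v t + leftInversionParity cs w (v⁻¹ * t * v) := by
  induction v using cs.simple_induction_left generalizing t with
  | one => simp [leftInversionParity_one]
  | mul_simple_left v i ih =>
    rw [mul_assoc, leftInversionParity_simple_mul, leftInversionParity_simple_mul, ih, add_assoc]
    simp only [mul_inv_rev, cs.inv_simple, mul_assoc]

open Classical in
theorem leftInversionParity_wordProd (ω : List B) (t : W) :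
    leftInversionParity cs (cs.wordProd ω) t = (cs.leftInvSeq ω).count t := by
  induction ω generalizing t with
  | nil => simp [leftInversionParity_one]
  | cons i ω ih =>
    have count_conj : ((cs.leftInvSeq ω).map (MulAut.conj (cs.simple i))).count t =
        (cs.leftInvSeq ω).count (cs.simple i * t * cs.simple i) := by
      have ht : t = MulAut.conj (cs.simple i) (cs.simple i * t * cs.simple i) := by
        simp [mul_assoc]
      conv_lhs => rw [ht]
      exact List.count_map_of_injective _ _ (MulAut.conj _).injective _
    rw [cs.wordProd_cons, leftInversionParity_simple_mul, ih, CoxeterSystem.leftInvSeq,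
      List.count_cons, count_conj, Nat.cast_add, add_comm]
    simp only [beq_iff_eq, eq_comm (a := t), Nat.cast_ite, Nat.cast_one, Nat.cast_zero]

theorem length_mul_lt_of_leftInversionParity_eq_one {w t : W}
    (h : leftInversionParity cs w t = 1) : cs.length (t * w) < cs.length w := by
  classical
  obtain ⟨ω, hω, rfl⟩ := cs.exists_isReduced w
  refine (cs.isLeftInversion_of_mem_leftInvSeq hω (List.count_pos_iff.1 ?_)).2
  rw [leftInversionParity_wordProd] at h
  exact Nat.pos_of_ne_zero fun h₀ => by simp [h₀] at h

theorem isLeftDescent_iff_leftInversionParity_eq_one {w : W} {i : B} :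
    cs.IsLeftDescent w i ↔ leftInversionParity cs w (cs.simple i) = 1 := by
  refine ⟨fun h => ?_, length_mul_lt_of_leftInversionParity_eq_one cs⟩
  refine Fin.eq_one_of_ne_zero _ fun hzero => ?_
  have parity_simple_mul : leftInversionParity cs (cs.simple i * w) (cs.simple i) = 1 := by
    rw [leftInversionParity_simple_mul, if_pos rfl, cs.simple_mul_simple_self, one_mul]
    exact add_eq_left.2 hzero
  have hlt := length_mul_lt_of_leftInversionParity_eq_one cs parity_simple_mul
  rw [cs.simple_mul_simple_cancel_left] at hlt
  exact hlt.not_gt h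

end Inversions

section WeakOrder

variable {B W : Type*} [Group W] {M : CoxeterMatrix B} {cs : CoxeterSystem M W}

theorem weakLE_mul_iff {v z : W} :
    WeakLE cs v (v * z) ↔ cs.length v + cs.length z = cs.length (v * z) := by
  rw [WeakLE, inv_mul_cancel_left]

theorem weakLE_inv_mul_iff {v z : W} :
    WeakLE cs z⁻¹ (v * z)⁻¹ ↔ cs.length v + cs.length z = cs.length (v * z) := by
  rw [mul_inv_rev, weakLE_mul_iff, ← mul_inv_rev, cs.length_inv, cs.length_inv, cs.length_inv,
    add_comm]

theorem WeakLE.isLeftDescent {v w : W} {i : B} (hvw : WeakLE cs v w)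
    (hv : cs.IsLeftDescent v i) : cs.IsLeftDescent w i := by
  have hle := cs.length_mul_le (cs.simple i * v) (v⁻¹ * w)
  rw [mul_assoc, mul_inv_cancel_left] at hle
  unfold WeakLE at hvw
  unfold CoxeterSystem.IsLeftDescent at *
  omega

theorem WeakLE.simple_mul_simple_mul {v w : W} {i : B} (hvw : WeakLE cs v w)
    (hv : cs.IsLeftDescent v i) : WeakLE cs (cs.simple i * v) (cs.simple i * w) := by
  have hw := cs.isLeftDescent_iff.1 (hvw.isLeftDescent hv)
  rw [cs.isLeftDescent_iff] at hv
  unfold WeakLE at *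
  rw [mul_inv_rev, cs.inv_simple, mul_assoc, cs.simple_mul_simple_cancel_left]
  omega

theorem WeakLE.simple_mul_of_not_isLeftDescent {v w : W} {i : B} (hvw : WeakLE cs v w)
    (hv : ¬cs.IsLeftDescent v i) (hw : cs.IsLeftDescent w i) : WeakLE cs v (cs.simple i * w) := by
  have parity_inv_mul : leftInversionParity cs (v⁻¹ * w) (v⁻¹ * cs.simple i * v) = 1 := by
    have parity_mul := leftInversionParity_mul cs v (v⁻¹ * w) (cs.simple i)
    rw [mul_inv_cancel_left, (isLeftDescent_iff_leftInversionParity_eq_one cs).1 hw] at parity_mul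
    rw [isLeftDescent_iff_leftInversionParity_eq_one] at hv
    have parity_zero : leftInversionParity cs v (cs.simple i) = 0 := by
      by_contra hne
      exact hv (Fin.eq_one_of_ne_zero _ hne)
    rw [parity_mul, parity_zero, zero_add]
  have hlt := length_mul_lt_of_leftInversionParity_eq_one cs parity_inv_mul
  rw [mul_assoc, mul_inv_cancel_left, mul_assoc] at hlt
  have hle := cs.length_le_length_mul_add_left v⁻¹ (cs.simple i * w)
  rw [cs.length_inv] at hle
  rw [cs.isLeftDescent_iff] at hw
  unfold WeakLE at *
  omega

theorem WeakLE.simple_mul_left {v w : W} {i : B} (hvw : WeakLE cs v w)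
    (hv : ¬cs.IsLeftDescent v i) (hw : cs.IsLeftDescent w i) : WeakLE cs (cs.simple i * v) w := by
  have hvw' := hvw.simple_mul_of_not_isLeftDescent hv hw
  rw [cs.not_isLeftDescent_iff] at hv
  rw [cs.isLeftDescent_iff] at hw
  unfold WeakLE at *
  rw [mul_inv_rev, cs.inv_simple, mul_assoc]
  omega

theorem weakLE_simple_iff {w : W} {i : B} :
    WeakLE cs (cs.simple i) w ↔ cs.IsLeftDescent w i := by
  rw [WeakLE, cs.length_simple, cs.inv_simple, cs.isLeftDescent_iff, add_comm]

theorem isLeftDescent_simple_mul_of_commute {v : W} {i j : B}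
    (hij : Commute (cs.simple i) (cs.simple j)) (hi : cs.IsLeftDescent v i)
    (hj : ¬cs.IsLeftDescent v j) : cs.IsLeftDescent (cs.simple j * v) i := by
  have hle := cs.length_mul_le (cs.simple j) (cs.simple i * v)
  rw [cs.length_simple, ← mul_assoc, ← hij.eq, mul_assoc] at hle
  rw [cs.isLeftDescent_iff] at hi
  rw [cs.not_isLeftDescent_iff] at hj
  unfold CoxeterSystem.IsLeftDescent
  omega

theorem isReduced_of_cons {a : B} {ω : List B} (hω : cs.IsReduced (a :: ω)) : cs.IsReduced ω :=
  hω.drop 1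

theorem not_isLeftDescent_of_isReduced_cons {a : B} {ω : List B} (hω : cs.IsReduced (a :: ω)) :
    ¬cs.IsLeftDescent (cs.wordProd ω) a := by
  rw [cs.not_isLeftDescent_iff, ← cs.wordProd_cons, hω.eq, (isReduced_of_cons hω).eq,
    List.length_cons]

theorem isLeftDescent_of_isReduced_cons {a : B} {ω : List B} (hω : cs.IsReduced (a :: ω)) :
    cs.IsLeftDescent (cs.wordProd (a :: ω)) a := by
  rw [cs.isLeftDescent_iff, cs.wordProd_cons, cs.simple_mul_simple_cancel_left,
    ← cs.wordProd_cons, hω.eq, (isReduced_of_cons hω).eq, List.length_cons]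

theorem WeakLE.wordProd_tail {a : B} {ω : List B} {u : W}
    (hωu : WeakLE cs (cs.wordProd (a :: ω)) u) (hω : cs.IsReduced (a :: ω)) :
    WeakLE cs (cs.wordProd ω) (cs.simple a * u) := by
  simpa only [cs.wordProd_cons, cs.simple_mul_simple_cancel_left] using
    hωu.simple_mul_simple_mul (isLeftDescent_of_isReduced_cons hω)

theorem commute_simple_of_eq_two {i j : B} (hij : M i j = 2) :
    Commute (cs.simple i) (cs.simple j) := by
  have hpow := cs.simple_mul_simple_pow i j
  rwa [hij, pow_two, mul_eq_one_iff_eq_inv, mul_inv_rev, cs.inv_simple, cs.inv_simple] at hpow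

theorem nodup_of_isReduced_of_commute {ω : List B} (hω : cs.IsReduced ω)
    (hcomm : ∀ a ∈ ω, ∀ b ∈ ω, Commute (cs.simple a) (cs.simple b)) : ω.Nodup := by
  classical
  induction ω with
  | nil => exact List.nodup_nil
  | cons a ω ih =>
    have hω' := isReduced_of_cons hω
    have hcomm' : ∀ b ∈ ω, ∀ c ∈ ω, Commute (cs.simple b) (cs.simple c) := fun b hb c hc =>
      hcomm b (List.mem_cons_of_mem a hb) c (List.mem_cons_of_mem a hc)
    refine List.nodup_cons.2 ⟨fun ha => ?_, ih hω' hcomm'⟩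
    have wordProd_eq : cs.wordProd ω = cs.simple a * cs.wordProd (ω.erase a) := by
      rw [← cs.wordProd_cons]
      refine ((List.perm_cons_erase ha).map cs.simple).prod_eq' ?_
      exact List.pairwise_map.2 (List.pairwise_of_forall_mem_list hcomm')
    refine not_isLeftDescent_of_isReduced_cons hω ?_
    calc cs.length (cs.simple a * cs.wordProd ω)
        = cs.length (cs.wordProd (ω.erase a)) := by
          rw [wordProd_eq, cs.simple_mul_simple_cancel_left]
      _ ≤ (ω.erase a).length := cs.length_wordProd_le _
      _ < ω.length := by grind
      _ = cs.length (cs.wordProd ω) := hω'.eq.symm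

theorem length_le_card_of_isReduced_of_eq_two [Fintype B] {ω : List B} (hω : cs.IsReduced ω)
    (hclique : ∀ a ∈ ω, ∀ b ∈ ω, a ≠ b → M a b = 2) : ω.length ≤ Fintype.card B := by
  refine (nodup_of_isReduced_of_commute hω fun a ha b hb => ?_).length_le_card
  obtain rfl | hab := eq_or_ne a b
  · exact Commute.refl _
  · exact commute_simple_of_eq_two (hclique a ha b hb hab)

theorem natAbs_lift_le_length {f : B → Equiv.Perm ℤ} (hf : M.IsLiftable f)
    (hstep : ∀ i x, (f i x).natAbs ≤ x.natAbs + 1) (w : W) :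
    (cs.lift ⟨f, hf⟩ w 0).natAbs ≤ cs.length w := by
  obtain ⟨ω, hω, rfl⟩ := cs.exists_isReduced w
  rw [hω.eq]
  clear hω
  induction ω with
  | nil => simp
  | cons i ω ih =>
    rw [cs.wordProd_cons, map_mul, cs.lift_apply_simple hf, Equiv.Perm.mul_apply, List.length_cons]
    exact (hstep i _).trans (Nat.add_le_add_right ih 1)

end WeakOrder

section RightAngled

variable {B W : Type*} [Group W] {M : CoxeterMatrix B}

namespace RightAngled

theorem isLiftable {G : Type*} [Monoid G] {f : B → G} (hra : RightAngled M)
    (hsq : ∀ i, f i * f i = 1) (hcomm : ∀ i j, M i j = 2 → Commute (f i) (f j)) :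
    M.IsLiftable f := by
  intro i j
  by_cases hij : i = j
  · rw [hij, M.diagonal, pow_one, hsq]
  · rcases hra i j hij with h | h
    · rw [h, (hcomm i j h).mul_pow, pow_two, pow_two, hsq, hsq, mul_one]
    · rw [h, pow_zero]

variable {cs : CoxeterSystem M W}

variable (cs) in
theorem simple_injective (hra : RightAngled M) : Function.Injective cs.simple := by
  classical
  intro i j hij
  have hlift : M.IsLiftable (fun a => if a = i then -1 else 1 : B → ℤˣ) :=
    hra.isLiftable (fun _ => Int.units_mul_self _) fun _ _ _ => Commute.all _ _
  have himage := congrArg (cs.lift ⟨_, hlift⟩) hij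
  by_contra hne
  simp [cs.lift_apply_simple hlift, Ne.symm hne] at himage

variable (cs) in
theorem length_simple_mul_simple_pow (hra : RightAngled M) {i j : B} (hij : M i j = 0) (n : ℕ) :
    cs.length ((cs.simple i * cs.simple j) ^ n) = 2 * n := by
  classical
  have hne : j ≠ i := by
    rintro rfl
    simp at hij
  -- `ℤ` is the Cayley graph of the infinite dihedral group `⟨sᵢ, sⱼ⟩`, on which `sᵢ` and `sⱼ` act
  -- by reflections moving `0` to its two neighbours.
  let f : B → Equiv.Perm ℤ := fun a =>
    if a = i then Equiv.subLeft 1 else if a = j then Equiv.subLeft (-1) else 1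
  have hsq (a : B) : f a * f a = 1 := by
    ext x
    simp only [f, Equiv.Perm.mul_apply]
    split_ifs <;> simp
  have hcomm (a b : B) (hab : M a b = 2) : Commute (f a) (f b) := by
    have hji : M j i = 0 := M.symmetric i j ▸ hij
    dsimp only [f]
    split_ifs <;> simp_all
  have hf := hra.isLiftable hsq hcomm
  have hstep (a : B) (x : ℤ) : (f a x).natAbs ≤ x.natAbs + 1 := by
    simp only [f]
    split_ifs <;> simp <;> omega
  have translation_pow : ((f i * f j) ^ n) 0 = 2 * n := by
    induction n with
    | zero => simp
    | succ n ih =>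
      rw [pow_succ', Equiv.Perm.mul_apply, ih]
      simp [f, hne]
      ring
  refine le_antisymm ?_ ?_
  · have hle := cs.length_wordProd_le (CoxeterSystem.alternatingWord i j (2 * n))
    rwa [cs.prod_alternatingWord_eq_mul_pow, if_pos (even_two_mul n), one_mul,
      Nat.mul_div_cancel_left n two_pos, CoxeterSystem.length_alternatingWord] at hle
  · have hle := natAbs_lift_le_length (cs := cs) hf hstep ((cs.simple i * cs.simple j) ^ n)
    rw [map_pow, map_mul, cs.lift_apply_simple hf, cs.lift_apply_simple hf, translation_pow] at hle
    omega

theorem weakLE_simple_mul_simple_pow (hra : RightAngled M) {w : W} {i j : B} (hij : M i j = 0)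
    (hi : cs.IsLeftDescent w i) (hj : cs.IsLeftDescent w j) (n : ℕ) :
    WeakLE cs ((cs.simple i * cs.simple j) ^ n) w := by
  induction n with
  | zero => simp [WeakLE]
  | succ n ih =>
    have length_pow := hra.length_simple_mul_simple_pow cs hij n
    have length_pow_succ := hra.length_simple_mul_simple_pow cs hij (n + 1)
    rw [pow_succ', mul_assoc] at length_pow_succ ⊢
    have hle := cs.length_mul_le (cs.simple i) (cs.simple j * (cs.simple i * cs.simple j) ^ n)
    have hle' := cs.length_mul_le (cs.simple j) ((cs.simple i * cs.simple j) ^ n)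
    rw [cs.length_simple] at hle hle'
    refine (ih.simple_mul_left ?_ hj).simple_mul_left ?_ hi
    all_goals
      unfold CoxeterSystem.IsLeftDescent
      omega

theorem eq_two_of_isLeftDescent (hra : RightAngled M) {w : W} {i j : B} (hij : i ≠ j)
    (hi : cs.IsLeftDescent w i) (hj : cs.IsLeftDescent w j) : M i j = 2 := by
  refine (hra i j hij).resolve_right fun h => ?_
  have hle := hra.weakLE_simple_mul_simple_pow h hi hj (cs.length w + 1)
  have hlength := hra.length_simple_mul_simple_pow cs h (cs.length w + 1)
  unfold WeakLE at hle
  omega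

theorem isLeftDescent_simple_mul (hra : RightAngled M) {w : W} {i j : B} (hij : i ≠ j)
    (hi : cs.IsLeftDescent w i) (hj : cs.IsLeftDescent w j) :
    cs.IsLeftDescent (cs.simple j * w) i := by
  have not_descent : ¬cs.IsLeftDescent (cs.simple i) j := by
    rw [CoxeterSystem.IsLeftDescent, cs.length_simple, Nat.lt_one_iff, cs.length_eq_zero_iff,
      mul_eq_one_iff_eq_inv, cs.inv_simple]
    exact fun h => hij (hra.simple_injective cs h).symm
  refine ((weakLE_simple_iff.2 hi).simple_mul_of_not_isLeftDescent not_descent hj).isLeftDescent ?_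
  exact weakLE_simple_iff.1 (by simp [WeakLE])

theorem eq_two_of_mem_of_not_isLeftDescent (hra : RightAngled M) {ω : List B} {u : W} {i : B}
    (hω : cs.IsReduced ω) (hωu : WeakLE cs (cs.wordProd ω) u) (hu : cs.IsLeftDescent u i)
    (hi : ¬cs.IsLeftDescent (cs.wordProd ω) i) : ∀ a ∈ ω, M i a = 2 := by
  induction ω generalizing u with
  | nil => simp
  | cons t ω ih =>
    have ht := isLeftDescent_of_isReduced_cons hω
    have hut := hωu.isLeftDescent ht
    have hit : i ≠ t := fun h => hi (h ▸ ht)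
    have hcomm := hra.eq_two_of_isLeftDescent hit hu hut
    refine List.forall_mem_cons.2 ⟨hcomm, ?_⟩
    refine ih (isReduced_of_cons hω) (hωu.wordProd_tail hω)
      (hra.isLeftDescent_simple_mul hit hu hut) fun h => hi ?_
    rw [cs.wordProd_cons]
    exact isLeftDescent_simple_mul_of_commute (commute_simple_of_eq_two hcomm) h
      (not_isLeftDescent_of_isReduced_cons hω)

theorem eq_two_of_mem_of_disjoint_isLeftDescent (hra : RightAngled M) {p q : List B} {u : W}
    (hp : cs.IsReduced p) (hq : cs.IsReduced q) (hpu : WeakLE cs (cs.wordProd p) u)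
    (hqu : WeakLE cs (cs.wordProd q) u)
    (hdisj : ∀ i, cs.IsLeftDescent (cs.wordProd p) i → ¬cs.IsLeftDescent (cs.wordProd q) i) :
    ∀ a ∈ p, ∀ b ∈ q, M a b = 2 := by
  induction p generalizing u with
  | nil => simp
  | cons s p ih =>
    have hs := isLeftDescent_of_isReduced_cons hp
    have hsu := hpu.isLeftDescent hs
    refine List.forall_mem_cons.2
      ⟨hra.eq_two_of_mem_of_not_isLeftDescent hq hqu hsu (hdisj s hs), ?_⟩
    refine ih (isReduced_of_cons hp) (hpu.wordProd_tail hp)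
      (hqu.simple_mul_of_not_isLeftDescent (hdisj s hs) hsu) fun i hip hiq => hdisj i ?_ hiq
    have his : i ≠ s := fun h => hdisj s hs (h ▸ hiq)
    have hcomm := hra.eq_two_of_isLeftDescent his (hqu.isLeftDescent hiq) hsu
    rw [cs.wordProd_cons]
    exact isLeftDescent_simple_mul_of_commute (commute_simple_of_eq_two hcomm) hip
      (not_isLeftDescent_of_isReduced_cons hp)

theorem exists_inv_mul_eq_wordProd (hra : RightAngled M) {v v' u : W} (hv : WeakLE cs v u)
    (hv' : WeakLE cs v' u) :
    ∃ p q : List B, cs.IsReduced p ∧ cs.IsReduced q ∧ (∀ a ∈ p, ∀ b ∈ q, M a b = 2) ∧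
      v⁻¹ * v' = (cs.wordProd p)⁻¹ * cs.wordProd q ∧
      cs.length v + q.length = cs.length v' + p.length := by
  by_cases hcommon : ∃ i, cs.IsLeftDescent v i ∧ cs.IsLeftDescent v' i
  · obtain ⟨i, hi, hi'⟩ := hcommon
    have hlt : cs.length (cs.simple i * v) < cs.length v := hi
    obtain ⟨p, q, hp, hq, hpq, hprod, hlength⟩ := hra.exists_inv_mul_eq_wordProd
      (hv.simple_mul_simple_mul hi) (hv'.simple_mul_simple_mul hi')
    rw [mul_inv_rev, mul_assoc, inv_mul_cancel_left] at hprod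
    rw [cs.isLeftDescent_iff] at hi hi'
    exact ⟨p, q, hp, hq, hpq, hprod, by omega⟩
  · push Not at hcommon
    obtain ⟨p, hp, rfl⟩ := cs.exists_isReduced v
    obtain ⟨q, hq, rfl⟩ := cs.exists_isReduced v'
    exact ⟨p, q, hp, hq, hra.eq_two_of_mem_of_disjoint_isLeftDescent hp hq hv hv' hcommon, rfl,
      by rw [hp.eq, hq.eq, add_comm]⟩
termination_by cs.length v

theorem pairwise_eq_two_or_of_not_hasInducedSquare (hra : RightAngled M)
    (hsq : ¬HasInducedSquare M) {p q : List B} (hpq : ∀ a ∈ p, ∀ b ∈ q, M a b = 2) :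
    (∀ a ∈ p, ∀ c ∈ p, a ≠ c → M a c = 2) ∨ ∀ b ∈ q, ∀ d ∈ q, b ≠ d → M b d = 2 := by
  by_contra! ⟨⟨a, ha, c, hc, hac, hac'⟩, b, hb, d, hd, hbd, hbd'⟩
  exact hsq ⟨a, b, c, d, hpq a ha b hb, M.symmetric b c ▸ hpq c hc b hb, hpq c hc d hd,
    M.symmetric d a ▸ hpq a ha d hd, (hra a c hac).resolve_left hac',
    (hra b d hbd).resolve_left hbd'⟩

theorem length_inv_mul_le [Fintype B] (hra : RightAngled M) (hsq : ¬HasInducedSquare M)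
    {v v' u : W} {D : ℕ} (hv : WeakLE cs v u) (hv' : WeakLE cs v' u)
    (hle : cs.length v ≤ cs.length v' + D) (hle' : cs.length v' ≤ cs.length v + D) :
    cs.length (v⁻¹ * v') ≤ 2 * Fintype.card B + D := by
  obtain ⟨p, q, hp, hq, hpq, hprod, hlength⟩ := hra.exists_inv_mul_eq_wordProd hv hv'
  have hle_add := cs.length_mul_le (cs.wordProd p)⁻¹ (cs.wordProd q)
  rw [← hprod, cs.length_inv, hp.eq, hq.eq] at hle_add
  rcases hra.pairwise_eq_two_or_of_not_hasInducedSquare hsq hpq with hclique | hclique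
  · have hcard := length_le_card_of_isReduced_of_eq_two hp hclique
    omega
  · have hcard := length_le_card_of_isReduced_of_eq_two hq hclique
    omega

end RightAngled

end RightAngled

section Counting

variable {B W : Type*} [Group W] {M : CoxeterMatrix B} {cs : CoxeterSystem M W}

variable (cs) in
theorem finite_setOf_length_le [Finite B] (R : ℕ) : {w : W | cs.length w ≤ R}.Finite := by
  refine ((List.finite_length_le B R).image cs.wordProd).subset fun w hw => ?_
  obtain ⟨ω, hω, rfl⟩ := cs.exists_isReduced w
  exact ⟨ω, hω.eq.symm.trans_le hw, rfl⟩

theorem CliqueProd.length_le_card [DecidableEq B] {Γ : Finset B} {g : W}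
    (hg : CliqueProd cs Γ g) : cs.length g ≤ Γ.card := by
  obtain ⟨l, hl, rfl, rfl⟩ := hg
  rw [List.toFinset_card_of_nodup hl]
  exact cs.length_wordProd_le l

namespace TupleCond

variable [DecidableEq B] {i : ℕ} {x y u v₁ v₂ w₁ w₂ : W} {Γ₁ Γ₂ : Finset B}

theorem exists_length_add_length_add_length
    (h : TupleCond M cs i x y (u, Γ₁, v₁, v₂, Γ₂, w₁, w₂)) :
    ∃ g, x = v₁ * g * v₂ ∧ cs.length v₁ + cs.length g + cs.length v₂ = cs.length x := by
  obtain ⟨-, -, ⟨g, hg, hx⟩, -, -, -, -, hv₁, hv₂, -, -⟩ := h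
  have hg_le := hg.length_le_card
  have hle := cs.length_mul_le (v₁ * g) v₂
  have hle' := cs.length_mul_le v₁ g
  rw [← hx] at hle
  exact ⟨g, hx, by omega⟩

theorem weakLE_left (h : TupleCond M cs i x y (u, Γ₁, v₁, v₂, Γ₂, w₁, w₂)) : WeakLE cs v₁ x := by
  obtain ⟨g, rfl, hlength⟩ := h.exists_length_add_length_add_length
  have hle := cs.length_mul_le v₁ (g * v₂)
  have hle' := cs.length_mul_le g v₂
  rw [mul_assoc] at hlength ⊢
  exact weakLE_mul_iff.2 (by omega)

theorem inv_weakLE_inv_left (h : TupleCond M cs i x y (u, Γ₁, v₁, v₂, Γ₂, w₁, w₂)) :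
    WeakLE cs v₂⁻¹ x⁻¹ := by
  obtain ⟨g, rfl, hlength⟩ := h.exists_length_add_length_add_length
  have hle := cs.length_mul_le (v₁ * g) v₂
  have hle' := cs.length_mul_le v₁ g
  exact weakLE_inv_mul_iff.2 (by omega)

theorem inv_weakLE_inv_right (h : TupleCond M cs i x y (u, Γ₁, v₁, v₂, Γ₂, w₁, w₂)) :
    WeakLE cs (w₁⁻¹ * u)⁻¹ y⁻¹ := by
  obtain ⟨-, -, -, rfl, -, hw₁u, hu, -, -, hw₁, hw₂⟩ := h
  unfold WeakLE at hw₁u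
  rw [mul_inv_rev w₁, mul_assoc] at hw₁ hw₂ ⊢
  rw [weakLE_inv_mul_iff, cs.length_inv]
  omega

end TupleCond

/-- The position of a tuple relative to a base tuple `p₀`. The third entry compares the elements
`w₁⁻¹u`, the part of `u` which is not cancelled in `y = w₂⁻¹(w₁⁻¹u)`. -/
def relativePosition (p₀ p : W × Finset B × W × W × Finset B × W × W) :
    W × W × W × W × Finset B × Finset B :=
  match p₀, p with
  | (u₀, _, v₁₀, v₂₀, _, w₁₀, _), (u, Γ₁, v₁, v₂, Γ₂, w₁, _) =>
    (v₁₀⁻¹ * v₁, v₁⁻¹ * w₁, (w₁₀⁻¹ * u₀) * (w₁⁻¹ * u)⁻¹, v₂₀ * v₂⁻¹, Γ₁, Γ₂)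

variable (cs) in
/-- The relative positions all of whose entries in `W` have length at most `R`. -/
def shortPositions (R : ℕ) : Set (W × W × W × W × Finset B × Finset B) :=
  let ball := {w | cs.length w ≤ R}
  ball ×ˢ ball ×ˢ ball ×ˢ ball ×ˢ Set.univ ×ˢ Set.univ

variable (cs) in
theorem finite_shortPositions [Finite B] (R : ℕ) : (shortPositions cs R).Finite := by
  have hball := finite_setOf_length_le cs R
  exact hball.prod <| hball.prod <| hball.prod <| hball.prod <|
    Set.finite_univ.prod Set.finite_univ

variable [DecidableEq B] {i : ℕ} {x y : W}

theorem injOn_relativePosition (p₀ : W × Finset B × W × W × Finset B × W × W) :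
    Set.InjOn (relativePosition p₀) {p | TupleCond M cs i x y p} := by
  rintro ⟨u, Γ₁, v₁, v₂, Γ₂, w₁, w₂⟩ ⟨-, -, -, hy, -⟩
    ⟨u', Γ₁', v₁', v₂', Γ₂', w₁', w₂'⟩ ⟨-, -, -, hy', -⟩ h
  simp only [relativePosition, Prod.mk.injEq] at h
  obtain ⟨hv₁, hw₁, hu, hv₂, rfl, rfl⟩ := h
  obtain rfl := mul_left_cancel hv₁
  obtain rfl := mul_left_cancel hw₁
  obtain rfl := mul_left_cancel (inv_injective (mul_left_cancel hu))
  obtain rfl := inv_injective (mul_left_cancel hv₂)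
  obtain rfl := mul_left_cancel (inv_injective (mul_right_cancel (hy.symm.trans hy')))
  rfl

theorem mapsTo_relativePosition [Fintype B] (hra : RightAngled M) (hsq : ¬HasInducedSquare M)
    {p₀ : W × Finset B × W × W × Finset B × W × W} (h₀ : TupleCond M cs i x y p₀) :
    Set.MapsTo (relativePosition p₀) {p | TupleCond M cs i x y p}
      (shortPositions cs (3 * Fintype.card B)) := by
  have length_le {v v' u : W} (hv : WeakLE cs v u) (hv' : WeakLE cs v' u)
      (hle : cs.length v ≤ cs.length v' + Fintype.card B)
      (hle' : cs.length v' ≤ cs.length v + Fintype.card B) :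
      cs.length (v⁻¹ * v') ≤ 3 * Fintype.card B :=
    (hra.length_inv_mul_le hsq hv hv' hle hle').trans_eq (by ring)
  obtain ⟨u₀, Γ₁₀, v₁₀, v₂₀, Γ₂₀, w₁₀, w₂₀⟩ := p₀
  rintro ⟨u, Γ₁, v₁, v₂, Γ₂, w₁, w₂⟩ h
  have hv₁x₀ := h₀.weakLE_left
  have hv₂x₀ := h₀.inv_weakLE_inv_left
  have hzy₀ := h₀.inv_weakLE_inv_right
  have hv₁x := h.weakLE_left
  have hv₂x := h.inv_weakLE_inv_left
  have hzy := h.inv_weakLE_inv_right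
  obtain ⟨-, -, -, -, -, hw₁u₀, hu₀, hv₁₀, hv₂₀, hw₁₀, -⟩ := h₀
  obtain ⟨-, -, -, -, hv₁u, hw₁u, hu, hv₁, hv₂, hw₁, -⟩ := h
  have card_Γ₁₀ := Γ₁₀.card_le_univ
  have card_Γ₂₀ := Γ₂₀.card_le_univ
  have card_Γ₁ := Γ₁.card_le_univ
  have card_Γ₂ := Γ₂.card_le_univ
  have length_z₀ : cs.length w₁₀ + cs.length (w₁₀⁻¹ * u₀) = cs.length u₀ := hw₁u₀
  have length_z : cs.length w₁ + cs.length (w₁⁻¹ * u) = cs.length u := hw₁u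
  refine ⟨length_le hv₁x₀ hv₁x (by omega) (by omega), length_le hv₁u hw₁u (by omega) (by omega),
    ?_, ?_, Set.mem_univ _, Set.mem_univ _⟩
  · have hle := length_le hzy₀ hzy
    rw [cs.length_inv, cs.length_inv, inv_inv] at hle
    exact hle (by omega) (by omega)
  · have hle := length_le hv₂x₀ hv₂x
    rw [cs.length_inv, cs.length_inv, inv_inv] at hle
    exact hle (by omega) (by omega)

end Counting

/-- If Γ contains no induced square, then the counts R_{x,y}(i) are
uniformly bounded: there is K > 0 with R_{x,y}(i) ≤ K for all i ∈ ℕ and x, y ∈ W. -/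
theorem tuple_count_bounded {B W : Type*} [Fintype B] [DecidableEq B] [Group W] {M : CoxeterMatrix B}
    (cs : CoxeterSystem M W) (hra : RightAngled M) (hsq : ¬HasInducedSquare M) :
    ∃ K : ℕ, 0 < K ∧ ∀ (i : ℕ) (x y : W),
      {p : W × Finset B × W × W × Finset B × W × W | TupleCond M cs i x y p}.Finite ∧
      Set.ncard {p : W × Finset B × W × W × Finset B × W × W | TupleCond M cs i x y p} ≤ K := by
  have hfinite := finite_shortPositions cs (3 * Fintype.card B)
  refine ⟨(shortPositions cs (3 * Fintype.card B)).ncard + 1, Nat.succ_pos _, fun i x y => ?_⟩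
  rcases {p | TupleCond M cs i x y p}.eq_empty_or_nonempty with hempty | ⟨p₀, h₀⟩
  · simp [hempty]
  · have hmaps := mapsTo_relativePosition hra hsq h₀
    have hinj := injOn_relativePosition (cs := cs) (i := i) (x := x) (y := y) p₀
    exact ⟨Set.Finite.of_injOn hmaps hinj hfinite,
      (Set.ncard_le_ncard_of_injOn _ hmaps hinj hfinite).trans (Nat.le_succ _)⟩
end
end
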